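/- Let l ≥ 2 be an integer and let m be a real with 1 ≤ m ≤ C(2l−1, l). Then g(l,m) ≤ g(l+1,m). -/

import Mathlib

attribute [local instance] Classical.propDecidable

/-- The generalized binomial coefficient `C(x,j) = x(x−1)⋯(x−j+1)/j!` for real `x`. -/
noncomputable def genChoose (x : ℝ) (j : ℕ) : ℝ :=
  (descPochhammer ℝ j).eval x / (Nat.factorial j)

/-- `x(l,m)`: the unique real `x ≥ l−1` with `C(x,l) = m` (for `m > 0`). -/
noncomputable def xval (l : ℕ) (m : ℝ) : ℝ :=
  if h : ∃ x : ℝ, (l : ℝ) - 1 ≤ x ∧ genChoose x l = m then h.choose else 0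

/-- `g(l,m) = C(x(l,m), l−1) − C(x(l,m), l)`. -/
noncomputable def gval (l : ℕ) (m : ℝ) : ℝ :=
  genChoose (xval l m) (l - 1) - genChoose (xval l m) l

/-!
Substitute `x = n + (n + 1) * t`. Since `C(x, n + 1) = C(x, n) * t`, the value `t(n)` of `t` at
`x = x(n + 1, m)` satisfies `g(n + 1, m) = m / t(n) - m`, so it suffices that `t(n)` decreases
with `n`. For fixed `t ≥ 0`, Pascal's rule makes `C(n + (n + 1) * t, n)`, and hence
`C(n + (n + 1) * t, n + 1)`, increase with `n`; so a larger `n` reaches the value `m` at a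
smaller `t`.
-/

theorem genChoose_eq_ringChoose (x : ℝ) (n : ℕ) : genChoose x n = Ring.choose x n := by
  rw [genChoose, Ring.choose_eq_smul, smul_eq_mul, div_eq_inv_mul, ← Polynomial.aeval_eq_smeval,
    ← Polynomial.eval_map_algebraMap, descPochhammer_map]

theorem genChoose_natCast_self (n : ℕ) : genChoose n n = 1 := by
  rw [genChoose_eq_ringChoose, Ring.choose_natCast, Nat.choose_self, Nat.cast_one]

theorem genChoose_add_one_succ (x : ℝ) (n : ℕ) :
    genChoose (x + 1) (n + 1) = genChoose x n + genChoose x (n + 1) := by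
  simp only [genChoose_eq_ringChoose, Ring.choose_succ_succ]

theorem genChoose_succ (x : ℝ) (n : ℕ) :
    genChoose x (n + 1) = genChoose x n * ((x - n) / (n + 1)) := by
  rw [genChoose, genChoose, descPochhammer_succ_eval, Nat.factorial_succ, Nat.cast_mul,
    Nat.cast_succ, mul_comm ((n : ℝ) + 1), mul_div_mul_comm]

theorem continuous_genChoose (n : ℕ) : Continuous (genChoose · n) :=
  continuous_descPochhammer_eval.div_const _

theorem genChoose_nonneg {n : ℕ} {x : ℝ} (hx : (n : ℝ) - 1 ≤ x) : 0 ≤ genChoose x n :=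
  div_nonneg (descPochhammer_nonneg hx) (Nat.cast_nonneg _)

theorem genChoose_le_genChoose {n : ℕ} {x y : ℝ} (hx : (n : ℝ) - 1 ≤ x) (hxy : x ≤ y) :
    genChoose x n ≤ genChoose y n :=
  div_le_div_of_nonneg_right (monotoneOn_descPochhammer_eval n hx (hx.trans hxy) hxy)
    (Nat.cast_nonneg _)

theorem one_le_genChoose {n : ℕ} {x : ℝ} (hx : (n : ℝ) ≤ x) : 1 ≤ genChoose x n :=
  (genChoose_natCast_self n).symm.trans_le (genChoose_le_genChoose (sub_le_self _ zero_le_one) hx)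

theorem genChoose_le_genChoose_add_one_succ {n : ℕ} {x : ℝ} (hx : (n : ℝ) ≤ x) :
    genChoose x n ≤ genChoose (x + 1) (n + 1) := by
  rw [genChoose_add_one_succ]
  exact le_add_of_nonneg_right (genChoose_nonneg (by simpa using hx))

/-- The generalized binomial coefficient `C(x, n + 1)` in the coordinate `t = (x - n) / (n + 1)`,
in which the half-line `x ≥ n` becomes `t ≥ 0` for every `n`. -/
noncomputable def scaledChoose (n : ℕ) (t : ℝ) : ℝ :=
  genChoose (n + (n + 1) * t) (n + 1)

theorem natCast_le_add_succ_mul (n : ℕ) {t : ℝ} (ht : 0 ≤ t) : (n : ℝ) ≤ n + (n + 1) * t :=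
  le_add_of_nonneg_right (by positivity)

theorem scaledChoose_eq_genChoose_mul (n : ℕ) (t : ℝ) :
    scaledChoose n t = genChoose (n + (n + 1) * t) n * t := by
  rw [scaledChoose, genChoose_succ, add_sub_cancel_left,
    mul_div_cancel_left₀ t n.cast_add_one_ne_zero]

theorem scaledChoose_zero_right (n : ℕ) : scaledChoose n 0 = 0 := by
  rw [scaledChoose_eq_genChoose_mul, mul_zero]

theorem continuous_scaledChoose (n : ℕ) : Continuous (scaledChoose n) :=
  (continuous_genChoose (n + 1)).comp (by fun_prop)

theorem le_scaledChoose (n : ℕ) {t : ℝ} (ht : 0 ≤ t) : t ≤ scaledChoose n t := by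
  rw [scaledChoose_eq_genChoose_mul]
  exact le_mul_of_one_le_left ht (one_le_genChoose (natCast_le_add_succ_mul n ht))

theorem strictMonoOn_scaledChoose (n : ℕ) : StrictMonoOn (scaledChoose n) (Set.Ici 0) := by
  intro s (hs : 0 ≤ s) t (ht : 0 ≤ t) hst
  have hle : genChoose (n + (n + 1) * s) n ≤ genChoose (n + (n + 1) * t) n :=
    genChoose_le_genChoose ((sub_le_self _ zero_le_one).trans (natCast_le_add_succ_mul n hs))
      (by gcongr)
  have hpos : 0 < genChoose (n + (n + 1) * t) n :=
    zero_lt_one.trans_le (one_le_genChoose (natCast_le_add_succ_mul n ht))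
  rw [scaledChoose_eq_genChoose_mul, scaledChoose_eq_genChoose_mul]
  exact mul_lt_mul' hle hst hs hpos

theorem exists_scaledChoose_eq (n : ℕ) {m : ℝ} (hm : 0 ≤ m) :
    ∃ t : ℝ, 0 ≤ t ∧ scaledChoose n t = m := by
  have hlower : scaledChoose n 0 ≤ m := (scaledChoose_zero_right n).trans_le hm
  obtain ⟨t, ht, htm⟩ := intermediate_value_Icc hm (continuous_scaledChoose n).continuousOn
    ⟨hlower, le_scaledChoose n hm⟩
  exact ⟨t, ht.1, htm⟩

theorem monotone_scaledChoose_left {t : ℝ} (ht : 0 ≤ t) : Monotone (scaledChoose · t) := by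
  refine monotone_nat_of_le_succ fun n ↦ ?_
  have hn : (n : ℝ) ≤ n + (n + 1) * t := natCast_le_add_succ_mul n ht
  have hle : n + (n + 1) * t + 1 ≤ (n + 1 : ℕ) + ((n + 1 : ℕ) + 1) * t := by
    push_cast
    linarith
  have hn' : ((n + 1 : ℕ) : ℝ) - 1 ≤ n + (n + 1) * t + 1 := by
    push_cast
    linarith
  rw [scaledChoose_eq_genChoose_mul, scaledChoose_eq_genChoose_mul]
  gcongr
  calc genChoose (n + (n + 1) * t) n
      ≤ genChoose (n + (n + 1) * t + 1) (n + 1) := genChoose_le_genChoose_add_one_succ hn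
    _ ≤ genChoose ((n + 1 : ℕ) + ((n + 1 : ℕ) + 1) * t) (n + 1) :=
      genChoose_le_genChoose hn' hle

/-- The coordinate `t = (x - n) / (n + 1)` of `x = x(n + 1, m)`, that is, the solution `t ≥ 0` of
`scaledChoose n t = m`. The index is shifted by one from that of `xval`. -/
noncomputable def scaledXval (n : ℕ) (m : ℝ) : ℝ :=
  (xval (n + 1) m - n) / (n + 1)

section scaledXval

variable (n : ℕ) {m : ℝ}

theorem xval_succ_eq (m : ℝ) : xval (n + 1) m = n + (n + 1) * scaledXval n m := by
  rw [scaledXval, mul_div_cancel₀ _ n.cast_add_one_ne_zero, add_sub_cancel]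

theorem xval_succ_spec (hm : 0 ≤ m) :
    n ≤ xval (n + 1) m ∧ genChoose (xval (n + 1) m) (n + 1) = m := by
  have hex : ∃ x : ℝ, ((n + 1 : ℕ) : ℝ) - 1 ≤ x ∧ genChoose x (n + 1) = m := by
    obtain ⟨t, ht, htm⟩ := exists_scaledChoose_eq n hm
    exact ⟨n + (n + 1) * t, by simpa using natCast_le_add_succ_mul n ht, htm⟩
  rw [xval, dif_pos hex]
  simpa only [Nat.cast_succ, add_sub_cancel_right] using hex.choose_spec

theorem scaledXval_nonneg (hm : 0 ≤ m) : 0 ≤ scaledXval n m :=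
  div_nonneg (sub_nonneg.mpr (xval_succ_spec n hm).1) (by positivity)

theorem scaledChoose_scaledXval (hm : 0 ≤ m) : scaledChoose n (scaledXval n m) = m := by
  rw [scaledChoose, ← xval_succ_eq]
  exact (xval_succ_spec n hm).2

theorem scaledXval_pos (hm : 0 < m) : 0 < scaledXval n m := by
  refine (scaledXval_nonneg n hm.le).lt_of_ne' fun hzero ↦ hm.ne ?_
  rw [← scaledChoose_scaledXval n hm.le, hzero, scaledChoose_zero_right]

theorem antitone_scaledXval (hm : 0 ≤ m) : Antitone (scaledXval · m) := by
  intro k n hkn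
  have hle : scaledChoose n (scaledXval n m) ≤ scaledChoose n (scaledXval k m) :=
    calc scaledChoose n (scaledXval n m) = m := scaledChoose_scaledXval n hm
      _ = scaledChoose k (scaledXval k m) := (scaledChoose_scaledXval k hm).symm
      _ ≤ scaledChoose n (scaledXval k m) :=
        monotone_scaledChoose_left (scaledXval_nonneg k hm) hkn
  exact ((strictMonoOn_scaledChoose n).le_iff_le (scaledXval_nonneg n hm)
    (scaledXval_nonneg k hm)).mp hle

theorem gval_succ_eq (hm : 0 < m) : gval (n + 1) m = m / scaledXval n m - m := by
  have hmul : genChoose (xval (n + 1) m) n * scaledXval n m = m := by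
    rw [xval_succ_eq, ← scaledChoose_eq_genChoose_mul, scaledChoose_scaledXval n hm.le]
  rw [gval, (xval_succ_spec n hm.le).2, Nat.add_sub_cancel,
    eq_div_of_mul_eq (scaledXval_pos n hm).ne' hmul]

end scaledXval

theorem gval_mono_in_l_general (l : ℕ) (hl : 1 ≤ l) (m : ℝ) (hm : 0 < m) :
    gval l m ≤ gval (l + 1) m := by
  obtain ⟨n, rfl⟩ := Nat.exists_eq_add_of_le' hl
  have hpos : 0 < scaledXval (n + 1) m := scaledXval_pos (n + 1) hm
  have hle : scaledXval (n + 1) m ≤ scaledXval n m := antitone_scaledXval hm.le n.le_succ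
  rw [gval_succ_eq n hm, gval_succ_eq (n + 1) hm]
  gcongr

/-- Monotonicity in `l`: if `1 ≤ m ≤ C(2l−1,l)`, then `g(l,m) ≤ g(l+1,m)`. -/
theorem gval_mono_in_l (l : ℕ) (hl : 2 ≤ l) (m : ℝ) (hm1 : 1 ≤ m)
    (hm2 : m ≤ (Nat.choose (2 * l - 1) l : ℝ)) :
    gval l m ≤ gval (l + 1) m :=
  gval_mono_in_l_general l (one_le_two.trans hl) m (zero_lt_one.trans_le hm1)
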